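/- arXiv:1310.8296 — 2 statements merged into one kernel-verified Lean document; each statement's English description precedes it below -/
import Mathlib

section
/- (Theorem 1, change of numeraire.) Let n ≥ 1, let (a_{ij})_{i,j=0}^{n} be real constants with a_{ij} = a_{ji}, let r : ℝ → ℝ be continuous, let T ∈ ℝ, and let P : (0,∞)^{n+1} → ℝ satisfy P(aS₀, aS₁, …, aSₙ) = a·P(S₀, S₁, …, Sₙ) for all a > 0. Let U : (0,∞)ⁿ × ℝ → ℝ be twice continuously differentiable and define V : (0,∞)^{n+1} × ℝ → ℝ by V(S₀, S₁, …, Sₙ, t) = S₀ · U(S₁/S₀, …, Sₙ/S₀, t). Then: (i) V satisfies ∂V/∂t + (1/2)∑_{i,j=0}^{n} a_{ij} Sᵢ Sⱼ ∂²V/∂Sᵢ∂Sⱼ + r(t)∑_{i=0}^{n} Sᵢ ∂V/∂Sᵢ − r(t)V = 0 at every point of (0,∞)^{n+1} × ℝ if and only if U satisfies ∂U/∂t + (1/2)∑_{i,j=1}^{n} (a₀₀ − a_{i0} − a_{0j} + a_{ij}) zᵢ zⱼ ∂²U/∂zᵢ∂zⱼ = 0 at every point of (0,∞)ⁿ ×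 ℝ; and (ii) V(S₀, …, Sₙ, T) = P(S₀, …, Sₙ) for all (S₀, …, Sₙ) ∈ (0,∞)^{n+1} if and only if U(z₁, …, zₙ, T) = P(1, z₁, …, zₙ) for all (z₁, …, zₙ) ∈ (0,∞)ⁿ. -/
/-- Classical partial derivative of `f : (Fin n → ℝ) → ℝ → ℝ` in the `i`-th spatial
variable, at the spatial point `x` and time `t`. -/
noncomputable def pd {n : ℕ} (f : (Fin n → ℝ) → ℝ → ℝ) (i : Fin n)
    (x : Fin n → ℝ) (t : ℝ) : ℝ :=
  deriv (fun y => f (Function.update x i y) t) (x i)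

/-- Classical second partial derivative `∂²f/∂xᵢ∂xⱼ`. -/
noncomputable def pd2 {n : ℕ} (f : (Fin n → ℝ) → ℝ → ℝ) (i j : Fin n)
    (x : Fin n → ℝ) (t : ℝ) : ℝ :=
  pd (fun x t => pd f j x t) i x t

/-!
Put `zₖ = Sₖ₊₁ / S₀`. The change of variables acts diagonally on logarithmic derivatives:
`Sᵢ ∂zₖ/∂Sᵢ = eᵢₖ zₖ`, where `eᵢₖ` is `1` if `i = k + 1`, `-1` if `i = 0`, and `0` otherwise.
Since `V = S₀ U(z)` is homogeneous of degree one, Euler's identity `∑ Sᵢ ∂V/∂Sᵢ = V` cancels the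
interest-rate terms. The first derivatives of `V` are homogeneous of degree zero, hence functions
of `z` alone, and differentiating them once more gives
`Sᵢ Sⱼ ∂²V/∂Sᵢ∂Sⱼ = S₀ ∑ₖₗ eᵢₖ eⱼₗ zₖ zₗ ∂²U/∂zₖ∂zₗ`.
Contracting with `a` produces the coefficients
`∑ᵢⱼ aᵢⱼ eᵢₖ eⱼₗ = a₀₀ - aₖ₊₁,₀ - a₀,ₗ₊₁ + aₖ₊₁,ₗ₊₁`.
-/

open Filter Topology

/-- The open positive orthant `(0,∞)ⁿ`, in which price vectors and vectors of price ratios live. -/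
def posOrthant (n : ℕ) : Set (Fin n → ℝ) := {x | ∀ i, 0 < x i}

theorem isOpen_posOrthant (n : ℕ) : IsOpen (posOrthant n) := by
  simp only [posOrthant, Set.ofPred_forall]
  exact isOpen_iInter_of_finite fun i => isOpen_lt continuous_const (continuous_apply i)

theorem cons_one_mem_posOrthant {n : ℕ} {z : Fin n → ℝ} (hz : z ∈ posOrthant n) :
    (Fin.cons 1 z : Fin (n + 1) → ℝ) ∈ posOrthant (n + 1) :=
  Fin.cases one_pos hz

section PartialDerivatives

variable {n : ℕ} {f g : (Fin n → ℝ) → ℝ → ℝ} {x : Fin n → ℝ} {s : Set (Fin n → ℝ)} {t : ℝ}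

theorem hasDerivAt_comp_update (hf : DifferentiableAt ℝ (fun x => f x t) x) (i : Fin n) :
    HasDerivAt (fun y => f (Function.update x i y) t)
      (fderiv ℝ (fun x => f x t) x (Pi.single i 1)) (x i) :=
  hf.hasFDerivAt.comp_hasDerivAt_of_eq (x i) (hasDerivAt_update x i (x i))
    (Function.update_eq_self i x).symm

theorem pd_eq_fderiv (hf : DifferentiableAt ℝ (fun x => f x t) x) (i : Fin n) :
    pd f i x t = fderiv ℝ (fun x => f x t) x (Pi.single i 1) :=
  (hasDerivAt_comp_update hf i).deriv

theorem hasDerivAt_pd (hf : DifferentiableAt ℝ (fun x => f x t) x) (i : Fin n) :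
    HasDerivAt (fun y => f (Function.update x i y) t) (pd f i x t) (x i) :=
  (hasDerivAt_comp_update hf i).differentiableAt.hasDerivAt

theorem hasDerivAt_comp_curve {γ : ℝ → Fin n → ℝ} {γ' : Fin n → ℝ} {y : ℝ}
    (hf : DifferentiableAt ℝ (fun x => f x t) (γ y)) (hγ : HasDerivAt γ γ' y) :
    HasDerivAt (fun s => f (γ s) t) (∑ k, γ' k * pd f k (γ y) t) y := by
  refine (hf.hasFDerivAt.comp_hasDerivAt y hγ).congr_deriv ?_
  conv_lhs => rw [pi_eq_sum_univ' γ', map_sum]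
  simp only [map_smul, smul_eq_mul, pd_eq_fderiv hf]

theorem pd_congr_of_eventuallyEq (h : (fun x => f x t) =ᶠ[𝓝 x] fun x => g x t) (i : Fin n) :
    pd f i x t = pd g i x t := by
  have hupdate : Tendsto (Function.update x i) (𝓝 (x i)) (𝓝 x) := by
    simpa only [Function.update_eq_self] using
      (hasDerivAt_update x i (x i)).continuousAt.tendsto
  exact EventuallyEq.deriv_eq (hupdate.eventually h)

theorem differentiableOn_pd (hs : IsOpen s) (hf : ContDiffOn ℝ 2 (fun x => f x t) s) (i : Fin n) :
    DifferentiableOn ℝ (fun x => pd f i x t) s := by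
  have hfderiv : DifferentiableOn ℝ (fderiv ℝ fun x => f x t) s :=
    (hf.fderiv_of_isOpen hs (m := 1) (by norm_num)).differentiableOn one_ne_zero
  refine (hfderiv.clm_apply (differentiableOn_const (Pi.single i 1))).congr fun x hx => ?_
  exact pd_eq_fderiv ((hf.differentiableOn two_ne_zero).differentiableAt (hs.mem_nhds hx)) i

theorem contDiffOn_spatial_slice {m : WithTop ℕ∞}
    (hf : ContDiffOn ℝ m (fun p : (Fin n → ℝ) × ℝ => f p.1 p.2) {p | p.1 ∈ s}) (t : ℝ) :
    ContDiffOn ℝ m (fun x => f x t) s :=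
  hf.comp (f := fun x => (x, t)) (by fun_prop) fun _ hx => hx

theorem differentiable_time_slice
    (hf : DifferentiableOn ℝ (fun p : (Fin n → ℝ) × ℝ => f p.1 p.2) {p | p.1 ∈ s}) (hx : x ∈ s) :
    Differentiable ℝ (f x) :=
  differentiableOn_univ.1 <|
    hf.comp (f := fun t => (x, t)) (by fun_prop) fun _ _ => hx

end PartialDerivatives

/-- The prices `Sₖ₊₁ / S₀` of the assets `1, …, n` in units of asset `0`, the numeraire. -/
noncomputable def numeraireRatio {n : ℕ} (S : Fin (n + 1) → ℝ) : Fin n → ℝ :=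
  fun k => S k.succ / S 0

/-- The value `S₀ · U(S₁/S₀, …, Sₙ/S₀, t)` in currency of a claim worth `U` units of the
numeraire. -/
noncomputable def numeraireLift {n : ℕ} (U : (Fin n → ℝ) → ℝ → ℝ) (S : Fin (n + 1) → ℝ)
    (t : ℝ) : ℝ :=
  S 0 * U (numeraireRatio S) t

/-- The elasticity `∂ log(Sₖ₊₁ / S₀) / ∂ log Sᵢ` of the `k`-th price ratio with respect to the
price of asset `i`. -/
def logExposure {n : ℕ} (i : Fin (n + 1)) (k : Fin n) : ℝ :=
  (Fin.cons (-1) (Pi.single k 1) : Fin (n + 1) → ℝ) i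

/-- The first derivative of `numeraireLift U` with respect to the price of asset `i` (its hedge
ratio), as a function of the price ratios `z`. -/
noncomputable def hedgeRatio {n : ℕ} (U : (Fin n → ℝ) → ℝ → ℝ) :
    Fin (n + 1) → (Fin n → ℝ) → ℝ → ℝ :=
  Fin.cons (fun z t => U z t - ∑ k, z k * pd U k z t) (pd U)

/-- The covariance coefficients of the price ratios when `a` gives those of the prices. -/
def relativeCov {n : ℕ} (a : Fin (n + 1) → Fin (n + 1) → ℝ) (i j : Fin n) : ℝ :=
  a 0 0 - a i.succ 0 - a 0 j.succ + a i.succ j.succ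

/-- The Black–Scholes operator at zero interest rate,
`∂f/∂t + (1/2) ∑ᵢⱼ aᵢⱼ xᵢ xⱼ ∂²f/∂xᵢ∂xⱼ`. -/
noncomputable def diffusionOp {n : ℕ} (a : Fin n → Fin n → ℝ) (f : (Fin n → ℝ) → ℝ → ℝ)
    (x : Fin n → ℝ) (t : ℝ) : ℝ :=
  deriv (fun τ => f x τ) t + (1 / 2) * ∑ i, ∑ j, a i j * x i * x j * pd2 f i j x t

section NumeraireRatio

variable {n : ℕ} {S : Fin (n + 1) → ℝ}

theorem numeraireRatio_mem_posOrthant (hS : S ∈ posOrthant (n + 1)) :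
    numeraireRatio S ∈ posOrthant n :=
  fun k => div_pos (hS k.succ) (hS 0)

theorem numeraireRatio_cons_one (z : Fin n → ℝ) : numeraireRatio (Fin.cons 1 z) = z := by
  ext k
  simp only [numeraireRatio, Fin.cons_succ, Fin.cons_zero, div_one]

theorem numeraireLift_cons_one (U : (Fin n → ℝ) → ℝ → ℝ) (z : Fin n → ℝ) (t : ℝ) :
    numeraireLift U (Fin.cons 1 z) t = U z t := by
  rw [numeraireLift, numeraireRatio_cons_one, Fin.cons_zero, one_mul]

theorem smul_cons_one_numeraireRatio (hS : S 0 ≠ 0) :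
    S 0 • (Fin.cons 1 (numeraireRatio S) : Fin (n + 1) → ℝ) = S := by
  ext i
  cases i using Fin.cases with
  | zero => simp
  | succ k => simp [numeraireRatio, mul_div_cancel₀, hS]

theorem succ_eq_mul_numeraireRatio (hS : S 0 ≠ 0) (k : Fin n) :
    S k.succ = S 0 * numeraireRatio S k :=
  (mul_div_cancel₀ (S k.succ) hS).symm

theorem logExposure_zero (k : Fin n) : logExposure 0 k = -1 := rfl

theorem logExposure_succ (i k : Fin n) : logExposure i.succ k = (Pi.single i 1 : Fin n → ℝ) k :=
  Pi.single_comm ..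

theorem sum_mul_logExposure (c : Fin (n + 1) → ℝ) (k : Fin n) :
    ∑ i, c i * logExposure i k = c k.succ - c 0 := by
  simp only [logExposure, Fin.sum_univ_succ, Fin.cons_zero, mul_neg, mul_one, Fin.cons_succ,
    Pi.single_apply, mul_ite, mul_zero, Finset.sum_ite_eq', Finset.mem_univ, if_true]
  ring

theorem sum_logExposure_succ_mul (l : Fin n) (c : Fin n → ℝ) :
    ∑ k, logExposure l.succ k * c k = c l := by
  simp [logExposure_succ, Pi.single_apply]

theorem sum_mul_logExposure_mul_logExposure (a : Fin (n + 1) → Fin (n + 1) → ℝ) (k l : Fin n) :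
    ∑ i, (∑ j, a i j * logExposure j l) * logExposure i k = relativeCov a k l := by
  simp only [sum_mul_logExposure, relativeCov]
  ring

theorem sum_relativeCov_mul (a : Fin (n + 1) → Fin (n + 1) → ℝ) (X : Fin n → Fin n → ℝ) :
    ∑ k, ∑ l, relativeCov a k l * X k l =
      ∑ i, ∑ j, a i j * ∑ k, ∑ l, logExposure i k * logExposure j l * X k l := by
  symm
  calc ∑ i, ∑ j, a i j * ∑ k, ∑ l, logExposure i k * logExposure j l * X k l
      = ∑ i, ∑ j, ∑ k, ∑ l, a i j * logExposure j l * logExposure i k * X k l := by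
        simp only [Finset.mul_sum]
        exact Finset.sum_congr rfl fun i _ => Finset.sum_congr rfl fun j _ =>
          Finset.sum_congr rfl fun k _ => Finset.sum_congr rfl fun l _ => by ring
    _ = ∑ k, ∑ l, ∑ i, ∑ j, a i j * logExposure j l * logExposure i k * X k l := by
        rw [Finset.sum_comm_cycle]
        exact Finset.sum_congr rfl fun k _ => Finset.sum_comm_cycle
    _ = ∑ k, ∑ l, relativeCov a k l * X k l := by
        simp only [← Finset.sum_mul, sum_mul_logExposure_mul_logExposure]

theorem hasDerivAt_numeraireRatio_update {i : Fin (n + 1)} (hS0 : S 0 ≠ 0) (hSi : S i ≠ 0) :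
    HasDerivAt (fun y => numeraireRatio (Function.update S i y))
      (fun k => logExposure i k * numeraireRatio S k / S i) (S i) := by
  refine hasDerivAt_pi.2 fun k => ?_
  have hcoord := hasDerivAt_pi.1 (hasDerivAt_update S i (S i))
  have hdiv := (hcoord k.succ).fun_div (hcoord 0) (by simpa using hS0)
  refine hdiv.congr_deriv ?_
  simp only [Function.update_eq_self, numeraireRatio]
  cases i using Fin.cases with
  | zero =>
    simp only [ne_eq, Fin.succ_ne_zero, not_false_eq_true, Pi.single_eq_of_ne, zero_mul,
      Pi.single_eq_same, mul_one, zero_sub, logExposure_zero, neg_mul, one_mul]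
    field_simp
  | succ l =>
    rcases eq_or_ne k l with rfl | hkl
    · simp only [Pi.single_eq_same, one_mul, ne_eq, Fin.succ_ne_zero, not_false_eq_true,
        Pi.single_eq_of_ne', mul_zero, sub_zero, logExposure_succ]
      field_simp
    · simp [logExposure_succ, hkl]

end NumeraireRatio

section NumeraireLift

variable {n : ℕ} {U g : (Fin n → ℝ) → ℝ → ℝ} {S : Fin (n + 1) → ℝ} {t : ℝ}

theorem hasDerivAt_comp_numeraireRatio {i : Fin (n + 1)} (hS0 : S 0 ≠ 0) (hSi : S i ≠ 0)
    (hg : DifferentiableAt ℝ (fun z => g z t) (numeraireRatio S)) :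
    HasDerivAt (fun y => g (numeraireRatio (Function.update S i y)) t)
      ((∑ k, logExposure i k * (numeraireRatio S k * pd g k (numeraireRatio S) t)) / S i)
      (S i) := by
  have hchain := hasDerivAt_comp_curve (γ := fun y => numeraireRatio (Function.update S i y))
    (by simpa only [Function.update_eq_self] using hg)
    (hasDerivAt_numeraireRatio_update hS0 hSi)
  refine hchain.congr_deriv ?_
  simp only [Function.update_eq_self, Finset.sum_div]
  exact Finset.sum_congr rfl fun k _ => by ring

theorem mul_pd_comp_numeraireRatio {i : Fin (n + 1)} (hS0 : S 0 ≠ 0) (hSi : S i ≠ 0)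
    (hg : DifferentiableAt ℝ (fun z => g z t) (numeraireRatio S)) :
    S i * pd (fun S t => g (numeraireRatio S) t) i S t =
      ∑ k, logExposure i k * (numeraireRatio S k * pd g k (numeraireRatio S) t) := by
  rw [pd, (hasDerivAt_comp_numeraireRatio hS0 hSi hg).deriv, mul_div_cancel₀ _ hSi]

theorem pd_numeraireLift {i : Fin (n + 1)} (hS0 : S 0 ≠ 0) (hSi : S i ≠ 0)
    (hU : DifferentiableAt ℝ (fun z => U z t) (numeraireRatio S)) :
    pd (numeraireLift U) i S t = hedgeRatio U i (numeraireRatio S) t := by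
  have hprod := (hasDerivAt_pi.1 (hasDerivAt_update S i (S i)) 0).fun_mul
    (hasDerivAt_comp_numeraireRatio hS0 hSi hU)
  refine hprod.deriv.trans ?_
  cases i using Fin.cases with
  | zero =>
    simp [logExposure_zero, hedgeRatio, mul_div_cancel₀, hS0, sub_eq_add_neg]
  | succ l =>
    simp only [Function.update_eq_self, Pi.single_apply, (Fin.succ_ne_zero l).symm, if_false,
      zero_mul, zero_add, sum_logExposure_succ_mul, hedgeRatio, Fin.cons_succ, numeraireRatio]
    field_simp

theorem sum_mul_pd_numeraireLift (hS : ∀ i, S i ≠ 0)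
    (hU : DifferentiableAt ℝ (fun z => U z t) (numeraireRatio S)) :
    ∑ i, S i * pd (numeraireLift U) i S t = numeraireLift U S t := by
  simp only [pd_numeraireLift (hS 0) (hS _) hU, Fin.sum_univ_succ, hedgeRatio, Fin.cons_zero,
    Fin.cons_succ, succ_eq_mul_numeraireRatio (hS 0), mul_assoc, ← Finset.mul_sum, numeraireLift]
  ring

theorem pd_hedgeRatio_zero {z : Fin n → ℝ} (hU : DifferentiableAt ℝ (fun z => U z t) z)
    (hpd : ∀ l, DifferentiableAt ℝ (fun z => pd U l z t) z) (k : Fin n) :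
    pd (hedgeRatio U 0) k z t = -∑ l, z l * pd2 U k l z t := by
  have hcoord := hasDerivAt_pi.1 (hasDerivAt_update z k (z k))
  have hderiv := (hasDerivAt_pd hU k).fun_sub <| HasDerivAt.fun_sum (u := Finset.univ)
    fun l _ => (hcoord l).fun_mul (hasDerivAt_pd (hpd l) k)
  refine hderiv.deriv.trans ?_
  simp only [Function.update_eq_self, Finset.sum_add_distrib, Pi.single_apply, ite_mul, one_mul,
    zero_mul, Finset.sum_ite_eq', Finset.mem_univ, if_true, pd2]
  ring

theorem cons_one_mul_pd_hedgeRatio {z : Fin n → ℝ} (hU : DifferentiableAt ℝ (fun z => U z t) z)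
    (hpd : ∀ l, DifferentiableAt ℝ (fun z => pd U l z t) z) (j : Fin (n + 1)) (k : Fin n) :
    (Fin.cons 1 z : Fin (n + 1) → ℝ) j * pd (hedgeRatio U j) k z t =
      ∑ l, logExposure j l * (z l * pd2 U k l z t) := by
  cases j using Fin.cases with
  | zero =>
    simp only [Fin.cons_zero, one_mul, pd_hedgeRatio_zero hU hpd, logExposure_zero, neg_one_mul,
      Finset.sum_neg_distrib]
  | succ l => exact (sum_logExposure_succ_mul l fun l => z l * pd2 U k l z t).symm

theorem differentiableAt_hedgeRatio {z : Fin n → ℝ} (hU : DifferentiableAt ℝ (fun z => U z t) z)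
    (hpd : ∀ l, DifferentiableAt ℝ (fun z => pd U l z t) z) (j : Fin (n + 1)) :
    DifferentiableAt ℝ (fun z => hedgeRatio U j z t) z := by
  cases j using Fin.cases with
  | zero =>
    exact hU.fun_sub (DifferentiableAt.fun_sum fun l _ =>
      (differentiableAt_apply l z).fun_mul (hpd l))
  | succ l => exact hpd l

theorem mul_mul_pd2_numeraireLift (hS : S ∈ posOrthant (n + 1))
    (hU : DifferentiableOn ℝ (fun z => U z t) (posOrthant n))
    (hpd : ∀ l, DifferentiableAt ℝ (fun z => pd U l z t) (numeraireRatio S))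
    (i j : Fin (n + 1)) :
    S i * S j * pd2 (numeraireLift U) i j S t =
      S 0 * ∑ k, ∑ l, logExposure i k * logExposure j l *
        (numeraireRatio S k * numeraireRatio S l * pd2 U k l (numeraireRatio S) t) := by
  set z := numeraireRatio S
  have hUat : ∀ w ∈ posOrthant n, DifferentiableAt ℝ (fun z => U z t) w := fun w hw =>
    hU.differentiableAt ((isOpen_posOrthant n).mem_nhds hw)
  have hUz := hUat z (numeraireRatio_mem_posOrthant hS)
  have hfirst : (fun S => pd (numeraireLift U) j S t) =ᶠ[𝓝 S]
      fun S => hedgeRatio U j (numeraireRatio S) t := by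
    filter_upwards [(isOpen_posOrthant (n + 1)).mem_nhds hS] with S' hS'
    exact pd_numeraireLift (hS' 0).ne' (hS' j).ne' (hUat _ (numeraireRatio_mem_posOrthant hS'))
  have hSj : S j = S 0 * (Fin.cons 1 z : Fin (n + 1) → ℝ) j :=
    (congrFun (smul_cons_one_numeraireRatio (hS 0).ne') j).symm
  calc S i * S j * pd2 (numeraireLift U) i j S t
      = S j * (S i * pd (fun S t => hedgeRatio U j (numeraireRatio S) t) i S t) := by
        rw [pd2, pd_congr_of_eventuallyEq hfirst]
        ring
    _ = S j * ∑ k, logExposure i k * (z k * pd (hedgeRatio U j) k z t) := by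
        rw [mul_pd_comp_numeraireRatio (hS 0).ne' (hS i).ne'
          (differentiableAt_hedgeRatio hUz hpd j)]
    _ = S 0 * ∑ k, logExposure i k *
          (z k * ((Fin.cons 1 z : Fin (n + 1) → ℝ) j * pd (hedgeRatio U j) k z t)) := by
        rw [hSj, mul_assoc, Finset.mul_sum]
        exact congrArg _ (Finset.sum_congr rfl fun k _ => by ring)
    _ = S 0 * ∑ k, ∑ l, logExposure i k * logExposure j l * (z k * z l * pd2 U k l z t) := by
        simp only [cons_one_mul_pd_hedgeRatio hUz hpd, Finset.mul_sum]
        exact Finset.sum_congr rfl fun k _ => Finset.sum_congr rfl fun l _ => by ring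

theorem diffusionOp_numeraireLift (a : Fin (n + 1) → Fin (n + 1) → ℝ)
    (hS : S ∈ posOrthant (n + 1))
    (hU : DifferentiableOn ℝ (fun z => U z t) (posOrthant n))
    (hpd : ∀ l, DifferentiableAt ℝ (fun z => pd U l z t) (numeraireRatio S))
    (htime : DifferentiableAt ℝ (U (numeraireRatio S)) t) :
    diffusionOp a (numeraireLift U) S t =
      S 0 * diffusionOp (relativeCov a) U (numeraireRatio S) t := by
  have hderiv : deriv (numeraireLift U S) t = S 0 * deriv (U (numeraireRatio S)) t :=
    deriv_const_mul (S 0) htime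
  set z := numeraireRatio S
  have hsum : ∑ i, ∑ j, a i j * S i * S j * pd2 (numeraireLift U) i j S t =
      S 0 * ∑ k, ∑ l, relativeCov a k l * z k * z l * pd2 U k l z t := by
    simp only [mul_assoc (relativeCov a _ _), sum_relativeCov_mul]
    simp only [mul_assoc (a _ _), mul_mul_pd2_numeraireLift hS hU hpd, mul_left_comm _ (S 0),
      ← Finset.mul_sum, z]
  rw [diffusionOp, diffusionOp, hderiv, hsum]
  ring

end NumeraireLift

theorem numeraireLift_eq_iff_of_homogeneous {n : ℕ} {P : (Fin (n + 1) → ℝ) → ℝ}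
    (hP : ∀ c : ℝ, 0 < c → ∀ S ∈ posOrthant (n + 1), P (c • S) = c * P S)
    (U : (Fin n → ℝ) → ℝ → ℝ) (T : ℝ) :
    (∀ S ∈ posOrthant (n + 1), numeraireLift U S T = P S) ↔
      ∀ z ∈ posOrthant n, U z T = P (Fin.cons 1 z) := by
  refine ⟨fun h z hz => ?_, fun h S hS => ?_⟩
  · rw [← h _ (cons_one_mem_posOrthant hz), numeraireLift_cons_one]
  · have hz := numeraireRatio_mem_posOrthant hS
    rw [numeraireLift, h _ hz, ← hP _ (hS 0) _ (cons_one_mem_posOrthant hz),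
      smul_cons_one_numeraireRatio (hS 0).ne']

theorem change_of_numeraire_general {n : ℕ} (a : Fin (n + 1) → Fin (n + 1) → ℝ) (r : ℝ → ℝ)
    (T : ℝ) {P : (Fin (n + 1) → ℝ) → ℝ}
    (hP : ∀ c : ℝ, 0 < c → ∀ S ∈ posOrthant (n + 1), P (c • S) = c * P S)
    {U : (Fin n → ℝ) → ℝ → ℝ}
    (hU : ∀ t, DifferentiableOn ℝ (fun z => U z t) (posOrthant n))
    (hpd : ∀ t k, DifferentiableOn ℝ (fun z => pd U k z t) (posOrthant n))
    (htime : ∀ z ∈ posOrthant n, Differentiable ℝ (U z)) :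
    ((∀ S ∈ posOrthant (n + 1), ∀ t : ℝ,
        diffusionOp a (numeraireLift U) S t
            + r t * ∑ i, S i * pd (numeraireLift U) i S t
            - r t * numeraireLift U S t = 0) ↔
      ∀ z ∈ posOrthant n, ∀ t : ℝ, diffusionOp (relativeCov a) U z t = 0) ∧
    ((∀ S ∈ posOrthant (n + 1), numeraireLift U S T = P S) ↔
      ∀ z ∈ posOrthant n, U z T = P (Fin.cons 1 z)) := by
  refine ⟨?_, numeraireLift_eq_iff_of_homogeneous hP U T⟩
  have hoperator : ∀ S ∈ posOrthant (n + 1), ∀ t,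
      diffusionOp a (numeraireLift U) S t + r t * ∑ i, S i * pd (numeraireLift U) i S t
        - r t * numeraireLift U S t =
      S 0 * diffusionOp (relativeCov a) U (numeraireRatio S) t := fun S hS t => by
    have hz := numeraireRatio_mem_posOrthant hS
    have hnhds := (isOpen_posOrthant n).mem_nhds hz
    rw [sum_mul_pd_numeraireLift (fun i => (hS i).ne') ((hU t).differentiableAt hnhds),
      add_sub_cancel_right, diffusionOp_numeraireLift a hS (hU t)
        (fun k => (hpd t k).differentiableAt hnhds) (htime _ hz t)]
  refine ⟨fun h z hz t => ?_, fun h S hS t => ?_⟩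
  · have hS := cons_one_mem_posOrthant hz
    simpa only [hoperator _ hS, numeraireRatio_cons_one, Fin.cons_zero, one_mul] using h _ hS t
  · rw [hoperator S hS, h _ (numeraireRatio_mem_posOrthant hS), mul_zero]

/-- Theorem 1 (change of numeraire): the `(n+1)`-dimensional Black–Scholes problem for `V`
is equivalent to the `n`-dimensional problem for `U`, where
`V(S₀,…,Sₙ,t) = S₀ · U(S₁/S₀,…,Sₙ/S₀,t)`. -/
theorem change_of_numeraire (n : ℕ) (hn : 1 ≤ n)
    (a : Fin (n + 1) → Fin (n + 1) → ℝ) (hsym : ∀ i j, a i j = a j i)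
    (r : ℝ → ℝ) (hr : Continuous r) (T : ℝ)
    (P : (Fin (n + 1) → ℝ) → ℝ)
    (hP : ∀ c : ℝ, 0 < c → ∀ S : Fin (n + 1) → ℝ, (∀ i, 0 < S i) →
      P (fun i => c * S i) = c * P S)
    (U : (Fin n → ℝ) → ℝ → ℝ)
    (hU : ContDiffOn ℝ 2 (fun p : (Fin n → ℝ) × ℝ => U p.1 p.2)
      {p : (Fin n → ℝ) × ℝ | ∀ i, 0 < p.1 i})
    (V : (Fin (n + 1) → ℝ) → ℝ → ℝ)
    (hV : ∀ S t, V S t = S 0 * U (fun i => S i.succ / S 0) t) :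
    ((∀ S : Fin (n + 1) → ℝ, (∀ i, 0 < S i) → ∀ t : ℝ,
        deriv (fun τ => V S τ) t
            + (1 / 2) * ∑ i : Fin (n + 1), ∑ j : Fin (n + 1),
                a i j * S i * S j * pd2 V i j S t
            + r t * ∑ i : Fin (n + 1), S i * pd V i S t
            - r t * V S t = 0) ↔
      (∀ z : Fin n → ℝ, (∀ i, 0 < z i) → ∀ t : ℝ,
        deriv (fun τ => U z τ) t
            + (1 / 2) * ∑ i : Fin n, ∑ j : Fin n,
                (a 0 0 - a i.succ 0 - a 0 j.succ + a i.succ j.succ)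
                  * z i * z j * pd2 U i j z t = 0))
    ∧
    ((∀ S : Fin (n + 1) → ℝ, (∀ i, 0 < S i) → V S T = P S) ↔
      (∀ z : Fin n → ℝ, (∀ i, 0 < z i) → U z T = P (Fin.cons 1 z))) := by
  obtain rfl : V = numeraireLift U := funext₂ hV
  have hslice := contDiffOn_spatial_slice (s := posOrthant n) hU
  exact change_of_numeraire_general a r T hP
    (fun t => (hslice t).differentiableOn two_ne_zero)
    (fun t => differentiableOn_pd (isOpen_posOrthant n) (hslice t))
    (fun _ => differentiable_time_slice (hU.differentiableOn two_ne_zero))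
end

section
/- (ESOP dimension reduction.) Let σ > 0, r ∈ ℝ, T₁ ∈ ℝ, K > 0, β ∈ ℝ, and let σ₀ : ℝ → ℝ be continuous. Let U : (0,∞) × ℝ → ℝ be twice continuously differentiable and define V(S, S₀, t) = S₀ · U(S/S₀, t) on (0,∞)² × ℝ. Then: (i) V satisfies ∂V/∂t + (1/2)[σ²S² ∂²V/∂S² + 2σσ₀(t)SS₀ ∂²V/∂S∂S₀ + σ₀(t)²S₀² ∂²V/∂S₀²] + rS ∂V/∂S + rS₀ ∂V/∂S₀ − rV = 0 at every point of (0,∞)² × ℝ if and only if U satisfies ∂U/∂t + (1/2)(σ − σ₀(t))² z² ∂²U/∂z² = 0 at every point of (0,∞) × ℝ; and (ii) V(S, S₀, T₁) = S − β·min(S, K·S₀) for all S, S₀ > 0 if and only if U(z, T₁) = (1−β)z + β·max(z − K, 0) for all z > 0. -/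
/-!
The function `V` is the perspective of `U`, hence homogeneous of degree one in `(S, S₀)`. Euler's
identity `S V_S + S₀ V_{S₀} = V` cancels all terms with the interest rate. The first derivatives
are homogeneous of degree zero, which makes the Hessian degenerate: its quadratic form is a
multiple of the square of `ξ - (S / S₀) η`, and at `(ξ, η) = (σ S, σ₀ S₀)` it leaves only
`(σ - σ₀)²`. The payoff is the perspective of the reduced payoff, so both equivalences
amount to cancelling `S₀` and letting `z = S / S₀` range over the positive reals.
-/

open Filter Set Topology

section Perspective

/-- The perspective `y f(x / y)` of a function `f`: its extension to a function of two variables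
that is homogeneous of degree one. It is only meaningful for `y ≠ 0`. -/
def perspective {𝕜 : Type*} [Field 𝕜] (f : 𝕜 → 𝕜) (x y : 𝕜) : 𝕜 :=
  y * f (x / y)

theorem perspective_eq_perspective_iff {𝕜 : Type*} [Field 𝕜] {f g : 𝕜 → 𝕜} {x y : 𝕜}
    (hy : y ≠ 0) : perspective f x y = perspective g x y ↔ f (x / y) = g (x / y) :=
  mul_right_inj' hy

variable {𝕜 : Type*} [NontriviallyNormedField 𝕜] {f : 𝕜 → 𝕜} {f' x y : 𝕜}

theorem hasDerivAt_comp_div_const (hf : HasDerivAt f f' (x / y)) :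
    HasDerivAt (fun s => f (s / y)) (f' / y) x :=
  (hf.comp x ((hasDerivAt_id' x).div_const y)).congr_deriv (mul_one_div f' y)

theorem hasDerivAt_comp_const_div (hy : y ≠ 0) (hf : HasDerivAt f f' (x / y)) :
    HasDerivAt (fun s => f (x / s)) (-(x / y) * f' / y) y := by
  have hdiv : HasDerivAt (fun s => x / s) (x * -(y ^ 2)⁻¹) y := by
    simpa only [div_eq_mul_inv] using (hasDerivAt_inv hy).const_mul x
  refine (hf.comp y hdiv).congr_deriv ?_
  field_simp

theorem hasDerivAt_perspective_left (hy : y ≠ 0) (hf : HasDerivAt f f' (x / y)) :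
    HasDerivAt (fun s => perspective f s y) f' x :=
  ((hasDerivAt_comp_div_const hf).const_mul y).congr_deriv (mul_div_cancel₀ f' hy)

theorem hasDerivAt_perspective_right (hy : y ≠ 0) (hf : HasDerivAt f f' (x / y)) :
    HasDerivAt (fun s => perspective f x s) (f (x / y) - x / y * f') y := by
  refine ((hasDerivAt_id' y).mul (hasDerivAt_comp_const_div hy hf)).congr_deriv ?_
  field_simp
  ring

theorem hasDerivAt_sub_id_mul_deriv (hf : DifferentiableAt 𝕜 f x)
    (hf' : DifferentiableAt 𝕜 (deriv f) x) :
    HasDerivAt (fun z => f z - z * deriv f z) (-(x * deriv (deriv f) x)) x := by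
  refine (hf.hasDerivAt.sub ((hasDerivAt_id' x).mul hf'.hasDerivAt)).congr_deriv ?_
  ring

theorem perspective_euler (hy : y ≠ 0) (hf : DifferentiableAt 𝕜 f (x / y)) :
    x * deriv (fun s => perspective f s y) x + y * deriv (fun s => perspective f x s) y =
      perspective f x y := by
  rw [(hasDerivAt_perspective_left hy hf.hasDerivAt).deriv,
    (hasDerivAt_perspective_right hy hf.hasDerivAt).deriv, perspective]
  field_simp
  ring

theorem deriv_deriv_perspective_left (hy : y ≠ 0)
    (hf : ∀ᶠ z in 𝓝 (x / y), DifferentiableAt 𝕜 f z)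
    (hf' : DifferentiableAt 𝕜 (deriv f) (x / y)) :
    deriv (deriv fun s => perspective f s y) x = deriv (deriv f) (x / y) / y := by
  have hfirst : (deriv fun s => perspective f s y) =ᶠ[𝓝 x] fun s => deriv f (s / y) := by
    filter_upwards [(continuousAt_id.div_const y).eventually hf] with s hs
    exact (hasDerivAt_perspective_left hy hs.hasDerivAt).deriv
  rw [hfirst.deriv_eq, (hasDerivAt_comp_div_const hf'.hasDerivAt).deriv]

theorem deriv_deriv_perspective_mixed (hy : y ≠ 0)
    (hf : ∀ᶠ z in 𝓝 (x / y), DifferentiableAt 𝕜 f z)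
    (hf' : DifferentiableAt 𝕜 (deriv f) (x / y)) :
    deriv (fun s => deriv (fun s₀ => perspective f s s₀) y) x =
      -(x / y * deriv (deriv f) (x / y)) / y := by
  have hfirst : (fun s => deriv (fun s₀ => perspective f s s₀) y) =ᶠ[𝓝 x]
      fun s => f (s / y) - s / y * deriv f (s / y) := by
    filter_upwards [(continuousAt_id.div_const y).eventually hf] with s hs
    exact (hasDerivAt_perspective_right hy hs.hasDerivAt).deriv
  rw [hfirst.deriv_eq]
  exact (hasDerivAt_comp_div_const (hasDerivAt_sub_id_mul_deriv hf.self_of_nhds hf')).deriv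

theorem deriv_deriv_perspective_right (hy : y ≠ 0)
    (hf : ∀ᶠ z in 𝓝 (x / y), DifferentiableAt 𝕜 f z)
    (hf' : DifferentiableAt 𝕜 (deriv f) (x / y)) :
    deriv (deriv fun s => perspective f x s) y =
      -(x / y) * -(x / y * deriv (deriv f) (x / y)) / y := by
  have hfirst : (deriv fun s => perspective f x s) =ᶠ[𝓝 y]
      fun s => f (x / s) - x / s * deriv f (x / s) := by
    filter_upwards [(continuousAt_const.div continuousAt_id hy).eventually hf,
      eventually_ne_nhds hy] with s hs hs₀
    exact (hasDerivAt_perspective_right hs₀ hs.hasDerivAt).deriv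
  rw [hfirst.deriv_eq]
  exact (hasDerivAt_comp_const_div hy (hasDerivAt_sub_id_mul_deriv hf.self_of_nhds hf')).deriv

theorem perspective_hessian_quadratic (a b : 𝕜) (hy : y ≠ 0)
    (hf : ∀ᶠ z in 𝓝 (x / y), DifferentiableAt 𝕜 f z)
    (hf' : DifferentiableAt 𝕜 (deriv f) (x / y)) :
    a ^ 2 * x ^ 2 * deriv (deriv fun s => perspective f s y) x
        + 2 * a * b * x * y * deriv (fun s => deriv (fun s₀ => perspective f s s₀) y) x
        + b ^ 2 * y ^ 2 * deriv (deriv fun s => perspective f x s) y =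
      y * ((a - b) ^ 2 * (x / y) ^ 2 * deriv (deriv f) (x / y)) := by
  rw [deriv_deriv_perspective_left hy hf hf', deriv_deriv_perspective_mixed hy hf hf',
    deriv_deriv_perspective_right hy hf hf']
  field_simp
  ring

end Perspective

section LinearOrderedField

variable {𝕜 : Type*} [Field 𝕜] [LinearOrder 𝕜] [IsStrictOrderedRing 𝕜]

theorem forall_pos_iff_forall_pos_div {p : 𝕜 → 𝕜 → Prop} {q : 𝕜 → Prop}
    (hpq : ∀ x y, 0 < x → 0 < y → (p x y ↔ q (x / y))) :
    (∀ x y, 0 < x → 0 < y → p x y) ↔ ∀ z, 0 < z → q z := by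
  refine ⟨fun hp z hz => ?_, fun hq x y hx hy => (hpq x y hx hy).2 (hq _ (div_pos hx hy))⟩
  simpa only [div_one] using (hpq z 1 hz one_pos).1 (hp z 1 hz one_pos)

theorem perspective_payoff (β K : 𝕜) {x y : 𝕜} (hy : 0 < y) :
    perspective (fun z => (1 - β) * z + β * max (z - K) 0) x y = x - β * min x (K * y) := by
  have hmax : y * max (x / y - K) 0 = x - min x (K * y) := by
    rw [mul_max_of_nonneg _ _ hy.le, mul_sub, mul_div_cancel₀ x hy.ne', mul_zero, mul_comm y K,
      ← sub_self x, max_sub_sub_left, min_comm]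
  have hx : y * (x / y) = x := mul_div_cancel₀ x hy.ne'
  rw [perspective]
  linear_combination (1 - β) * hx + β * hmax

end LinearOrderedField

section BlackScholes

/-- The left-hand side at `(S, S₀, t)` of the Black–Scholes equation for a claim `V` on two assets
driven by the same Brownian motion. The numbers `a`, `b` are the volatilities of the two assets at
time `t`, and `r` is the interest rate. -/
noncomputable def twoAssetBlackScholes (a b r : ℝ) (V : ℝ → ℝ → ℝ → ℝ) (S S₀ t : ℝ) : ℝ :=
  deriv (fun τ => V S S₀ τ) t
    + (1 / 2) * (a ^ 2 * S ^ 2 * deriv (deriv (fun s => V s S₀ t)) S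
      + 2 * a * b * S * S₀ * deriv (fun s => deriv (fun s₀ => V s s₀ t) S₀) S
      + b ^ 2 * S₀ ^ 2 * deriv (deriv (fun s₀ => V S s₀ t)) S₀)
    + r * S * deriv (fun s => V s S₀ t) S
    + r * S₀ * deriv (fun s₀ => V S s₀ t) S₀
    - r * V S S₀ t

/-- The left-hand side at `(z, t)` of the Black–Scholes equation without interest for a claim `U`
on a single asset, whose volatility at time `t` is the number `c`. For a claim on two assets this
is the equation that remains once the second asset is taken as numéraire. -/
noncomputable def zeroRateBlackScholes (c : ℝ) (U : ℝ → ℝ → ℝ) (z t : ℝ) : ℝ :=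
  deriv (fun τ => U z τ) t + (1 / 2) * c ^ 2 * z ^ 2 * deriv (deriv (fun w => U w t)) z

theorem twoAssetBlackScholes_perspective (a b r : ℝ) {U : ℝ → ℝ → ℝ} {S S₀ t : ℝ} (hS₀ : S₀ ≠ 0)
    (hUt : DifferentiableAt ℝ (U (S / S₀)) t)
    (hUz : ∀ᶠ z in 𝓝 (S / S₀), DifferentiableAt ℝ (fun w => U w t) z)
    (hUzz : DifferentiableAt ℝ (deriv fun w => U w t) (S / S₀)) :
    twoAssetBlackScholes a b r (fun S S₀ t => perspective (fun w => U w t) S S₀) S S₀ t =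
      S₀ * zeroRateBlackScholes (a - b) U (S / S₀) t := by
  have time_deriv : deriv (fun τ => perspective (fun w => U w τ) S S₀) t =
      S₀ * deriv (fun τ => U (S / S₀) τ) t := deriv_const_mul S₀ hUt
  have euler := perspective_euler hS₀ hUz.self_of_nhds
  have hessian := perspective_hessian_quadratic a b hS₀ hUz hUzz
  simp only [twoAssetBlackScholes, zeroRateBlackScholes]
  linear_combination time_deriv + r * euler + 1 / 2 * hessian

end BlackScholes

section Smoothness

variable {𝕜 E F G : Type*} [NontriviallyNormedField 𝕜] [NormedAddCommGroup E] [NormedSpace 𝕜 E]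
  [NormedAddCommGroup F] [NormedSpace 𝕜 F] [NormedAddCommGroup G] [NormedSpace 𝕜 G]
  {n : WithTop ℕ∞} {U : E → F → G} {s : Set (E × F)}

theorem contDiffOn_slice_left (hU : ContDiffOn 𝕜 n (fun p : E × F => U p.1 p.2) s) (y : F) :
    ContDiffOn 𝕜 n (fun x => U x y) {x | (x, y) ∈ s} :=
  hU.comp (contDiff_prodMk_left y).contDiffOn fun _ hx => hx

theorem contDiff_slice_right (hU : ContDiffOn 𝕜 n (fun p : E × F => U p.1 p.2) s) {x : E}
    (hx : ∀ y, (x, y) ∈ s) : ContDiff 𝕜 n (U x) :=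
  hU.comp_contDiff (contDiff_prodMk_right x) hx

theorem differentiableOn_deriv_of_contDiffOn_two {f : 𝕜 → G} {u : Set 𝕜}
    (hf : ContDiffOn 𝕜 2 f u) (hu : IsOpen u) : DifferentiableOn 𝕜 (deriv f) u :=
  (hf.deriv_of_isOpen hu one_add_one_eq_two.le).differentiableOn_one

end Smoothness

theorem esop_dimension_reduction_general (σ r T₁ K β : ℝ) (σ₀ : ℝ → ℝ) (U : ℝ → ℝ → ℝ)
    (hUt : ∀ z, 0 < z → Differentiable ℝ (U z))
    (hUz : ∀ t, DifferentiableOn ℝ (fun z => U z t) (Ioi 0))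
    (hUzz : ∀ t, DifferentiableOn ℝ (deriv fun z => U z t) (Ioi 0))
    (V : ℝ → ℝ → ℝ → ℝ) (hV : ∀ S S₀ t, V S S₀ t = S₀ * U (S / S₀) t) :
    ((∀ S S₀ t : ℝ, 0 < S → 0 < S₀ → twoAssetBlackScholes σ (σ₀ t) r V S S₀ t = 0) ↔
      ∀ z t : ℝ, 0 < z → zeroRateBlackScholes (σ - σ₀ t) U z t = 0) ∧
    ((∀ S S₀ : ℝ, 0 < S → 0 < S₀ → V S S₀ T₁ = S - β * min S (K * S₀)) ↔
      ∀ z : ℝ, 0 < z → U z T₁ = (1 - β) * z + β * max (z - K) 0) := by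
  obtain rfl : V = fun S S₀ t => perspective (fun w => U w t) S S₀ := by
    funext S S₀ t
    exact hV S S₀ t
  constructor
  · have equation_iff (t : ℝ) :
        (∀ S S₀, 0 < S → 0 < S₀ → twoAssetBlackScholes σ (σ₀ t) r
          (fun S S₀ t => perspective (fun w => U w t) S S₀) S S₀ t = 0) ↔
        ∀ z, 0 < z → zeroRateBlackScholes (σ - σ₀ t) U z t = 0 :=
      forall_pos_iff_forall_pos_div fun S S₀ hS hS₀ => by
        have hz : 0 < S / S₀ := div_pos hS hS₀
        rw [twoAssetBlackScholes_perspective σ (σ₀ t) r hS₀.ne' (hUt _ hz t)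
            ((hUz t).eventually_differentiableAt (Ioi_mem_nhds hz))
            ((hUzz t).differentiableAt (Ioi_mem_nhds hz)),
          mul_eq_zero_iff_left hS₀.ne']
    exact ⟨fun h z t => (equation_iff t).1 (fun S S₀ => h S S₀ t) z,
      fun h S S₀ t => (equation_iff t).2 (fun z => h z t) S S₀⟩
  · refine forall_pos_iff_forall_pos_div fun S S₀ _ hS₀ => ?_
    rw [← perspective_payoff β K hS₀, perspective_eq_perspective_iff hS₀.ne']

/-- ESOP dimension reduction: the two-factor Black–Scholes problem for
`V(S,S₀,t) = S₀ · U(S/S₀,t)` is equivalent to the one-dimensional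
problem for `U`. -/
theorem esop_dimension_reduction (σ r T₁ K β : ℝ) (hσ : 0 < σ) (hK : 0 < K)
    (σ₀ : ℝ → ℝ) (hσ₀ : Continuous σ₀)
    (U : ℝ → ℝ → ℝ)
    (hU : ContDiffOn ℝ 2 (fun p : ℝ × ℝ => U p.1 p.2) {p : ℝ × ℝ | 0 < p.1})
    (V : ℝ → ℝ → ℝ → ℝ)
    (hV : ∀ S S₀ t, V S S₀ t = S₀ * U (S / S₀) t) :
    ((∀ S S₀ t : ℝ, 0 < S → 0 < S₀ →
        deriv (fun τ => V S S₀ τ) t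
            + (1 / 2) * (σ ^ 2 * S ^ 2 * deriv (deriv (fun s => V s S₀ t)) S
                + 2 * σ * σ₀ t * S * S₀
                    * deriv (fun s => deriv (fun s₀ => V s s₀ t) S₀) S
                + (σ₀ t) ^ 2 * S₀ ^ 2 * deriv (deriv (fun s₀ => V S s₀ t)) S₀)
            + r * S * deriv (fun s => V s S₀ t) S
            + r * S₀ * deriv (fun s₀ => V S s₀ t) S₀
            - r * V S S₀ t = 0) ↔
      (∀ z t : ℝ, 0 < z →
        deriv (fun τ => U z τ) t
            + (1 / 2) * (σ - σ₀ t) ^ 2 * z ^ 2 * deriv (deriv (fun w => U w t)) z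
          = 0))
    ∧
    ((∀ S S₀ : ℝ, 0 < S → 0 < S₀ → V S S₀ T₁ = S - β * min S (K * S₀)) ↔
      (∀ z : ℝ, 0 < z → U z T₁ = (1 - β) * z + β * max (z - K) 0)) := by
  have hUz := contDiffOn_slice_left hU
  exact esop_dimension_reduction_general σ r T₁ K β σ₀ U
    (fun z hz => (contDiff_slice_right hU fun _ => hz).differentiable two_ne_zero)
    (fun t => (hUz t).differentiableOn two_ne_zero)
    (fun t => differentiableOn_deriv_of_contDiffOn_two (hUz t) isOpen_Ioi) V hV
end
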